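/- arXiv:2205.00881 — 2 statements merged into one kernel-verified Lean document; each statement's English description precedes it below -/
import Mathlib

section
/- Majority dynamics does not enable positive MajUD-consensus existence control: there exists a profile P (over at least 3 alternatives) that has a MajUD-consensus alternative such that for every update order σ, MD_σ(P) has no MajUD-consensus alternative. -/
attribute [local instance] Classical.propDecidable

noncomputable section

/-- A preference over the set of alternatives `A`: a binary relation. -/
abbrev Pref (A : Type) := A → A → Prop

/-- A preference is a strict partial order: irreflexive and transitive. -/
def IsPref {A : Type} (pref : Pref A) : Prop :=
  Irreflexive pref ∧ Transitive pref

variable {A : Type} [Fintype A] [DecidableEq A]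

/-- The support `n_P(ab)`: the number of agents preferring `a` to `b` in profile `P`. -/
def support {n : ℕ} (P : Fin n → Pref A) (a b : A) : ℕ :=
  (Finset.univ.filter fun i => P i a b).card

/-- An update order: a list of ordered pairs of distinct alternatives containing,
for each unordered pair `{a, b}` of distinct alternatives, exactly one of `ab` or `ba`,
each exactly once. -/
def IsUpdateOrder (σ : List (A × A)) : Prop :=
  (∀ p ∈ σ, p.1 ≠ p.2) ∧
  (∀ a b : A, a ≠ b → σ.count (a, b) + σ.count (b, a) = 1)

/-- One step of majority dynamics, discussing the pair `p`: agents already ranking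
`p.1` versus `p.2` keep their preference; every other agent adds `p.1 ≻ p.2` if
`n_P(p.1 p.2) ≥ n_P(p.2 p.1)` (ties broken in favour of the first alternative of the
pair), and otherwise adds `p.2 ≻ p.1`, then takes the transitive closure. -/
def mdStep {n : ℕ} (P : Fin n → Pref A) (p : A × A) : Fin n → Pref A :=
  fun i =>
    if P i p.1 p.2 ∨ P i p.2 p.1 then P i
    else if support P p.2 p.1 ≤ support P p.1 p.2 then
      Relation.TransGen (fun x y => P i x y ∨ (x = p.1 ∧ y = p.2))
    else
      Relation.TransGen (fun x y => P i x y ∨ (x = p.2 ∧ y = p.1))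

/-- Majority dynamics `MD_σ(P)`: process the pairs of the update order `σ` in order. -/
def MD {n : ℕ} (σ : List (A × A)) (P : Fin n → Pref A) : Fin n → Pref A :=
  σ.foldl mdStep P

/-- `a` is a Condorcet winner in `P`. -/
def CondorcetWinner {n : ℕ} (P : Fin n → Pref A) (a : A) : Prop :=
  ∀ b, b ≠ a → support P b a < support P a b

/-- `a` is a Condorcet loser in `P`. -/
def CondorcetLoser {n : ℕ} (P : Fin n → Pref A) (a : A) : Prop :=
  ∀ b, b ≠ a → support P a b < support P b a

/-- `a` is undominated in a preference. -/
def Undominated {A : Type} (pref : Pref A) (a : A) : Prop := ∀ b, ¬ pref b a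

/-- `a` is dominant in a preference. -/
def Dominant {A : Type} (pref : Pref A) (a : A) : Prop := ∀ b, b ≠ a → pref a b

/-- `a` is dominated (by every other alternative) in a preference. -/
def DominatedIn {A : Type} (pref : Pref A) (a : A) : Prop := ∀ b, b ≠ a → pref b a

/-- Number of preferences of `P` in which `a` is undominated. -/
def udCount {n : ℕ} (P : Fin n → Pref A) (a : A) : ℕ :=
  (Finset.univ.filter fun i => Undominated (P i) a).card

/-- Number of preferences of `P` in which `a` is dominant. -/
def domCount {n : ℕ} (P : Fin n → Pref A) (a : A) : ℕ :=
  (Finset.univ.filter fun i => Dominant (P i) a).card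

/-- Number of preferences of `P` in which `a` is dominated. -/
def domdCount {n : ℕ} (P : Fin n → Pref A) (a : A) : ℕ :=
  (Finset.univ.filter fun i => DominatedIn (P i) a).card

/-- `a` is undominated in at least one preference and no alternative is undominated
in strictly more preferences than `a`. -/
def PlurUDTop {n : ℕ} (P : Fin n → Pref A) (a : A) : Prop :=
  0 < udCount P a ∧ ∀ b, udCount P b ≤ udCount P a

/-- `a` is the PlurUD-consensus alternative of `P`. -/
def PlurUDConsensus {n : ℕ} (P : Fin n → Pref A) (a : A) : Prop :=
  PlurUDTop P a ∧ ∀ b, PlurUDTop P b → b = a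

/-- `a` is dominant in at least one preference and no alternative is dominant
in strictly more preferences than `a`. -/
def PlurDomTop {n : ℕ} (P : Fin n → Pref A) (a : A) : Prop :=
  0 < domCount P a ∧ ∀ b, domCount P b ≤ domCount P a

/-- `a` is the PlurDom-consensus alternative of `P`. -/
def PlurDomConsensus {n : ℕ} (P : Fin n → Pref A) (a : A) : Prop :=
  PlurDomTop P a ∧ ∀ b, PlurDomTop P b → b = a

/-- `a` is dominated in at least one preference and no alternative is dominated
in strictly more preferences than `a`. -/
def PlurDomdTop {n : ℕ} (P : Fin n → Pref A) (a : A) : Prop :=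
  0 < domdCount P a ∧ ∀ b, domdCount P b ≤ domdCount P a

/-- `a` is the (unique) plurality dominated alternative of `P`. -/
def PlurDomdConsensus {n : ℕ} (P : Fin n → Pref A) (a : A) : Prop :=
  PlurDomdTop P a ∧ ∀ b, PlurDomdTop P b → b = a

/-- `a` is the MajUD-consensus alternative of `P`: undominated in strictly more than
`n / 2` of the preferences, and the unique alternative with this property. -/
def MajUDConsensus {n : ℕ} (P : Fin n → Pref A) (a : A) : Prop :=
  (n < 2 * udCount P a) ∧ ∀ b, n < 2 * udCount P b → b = a

/-- `a` is the MajDom-consensus alternative of `P`: dominant in strictly more than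
`n / 2` of the preferences (such an alternative is automatically unique). -/
def MajDomConsensus {n : ℕ} (P : Fin n → Pref A) (a : A) : Prop :=
  n < 2 * domCount P a

/-- `a` is the UnanUD-consensus alternative of `P`: undominated in every preference,
and the unique alternative with this property. -/
def UnanUDConsensus {n : ℕ} (P : Fin n → Pref A) (a : A) : Prop :=
  (∀ i, Undominated (P i) a) ∧ ∀ b, (∀ i, Undominated (P i) b) → b = a

/-- `a` is the UnanDom-consensus alternative of `P`: dominant in every preference. -/
def UnanDomConsensus {n : ℕ} (P : Fin n → Pref A) (a : A) : Prop :=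
  ∀ i, Dominant (P i) a

/-- A preference is a strict weak ordering: there is an ordered partition of the
alternatives into levels (given by a level function `f`) such that alternatives in the
same level are incomparable, and `a ≻ b` exactly when `a` is in an earlier level. -/
def IsSWO (pref : Pref A) : Prop :=
  ∃ (k : ℕ) (f : A → Fin k), ∀ a b : A, pref a b ↔ f a < f b

/-- The invariant along the dynamics. -/
def Inv18 (Q : Fin 4 → Pref (Fin 3)) : Prop :=
  (∀ i x, ¬ Q i 0 x) ∧ Q 0 1 2 ∧ Q 1 1 2 ∧ Q 2 2 1 ∧ Q 3 2 1 ∧ (∀ x, x ≠ 0 → Q 3 x 0)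

theorem mdStep_mono18 (Q : Fin 4 → Pref (Fin 3)) (p : Fin 3 × Fin 3) (i : Fin 4) (x y : Fin 3)
    (h : Q i x y) : mdStep Q p i x y := by
  unfold mdStep
  split_ifs
  · exact h
  · exact Relation.TransGen.single (Or.inl h)
  · exact Relation.TransGen.single (Or.inl h)

theorem no_out18 {r : Fin 3 → Fin 3 → Prop} (h : ∀ y, ¬ r 0 y) (x : Fin 3) :
    ¬ Relation.TransGen r 0 x := by
  intro ht
  obtain ⟨y, hy, _⟩ := Relation.TransGen.head'_iff.1 ht
  exact h y hy

theorem support_zero18 {Q : Fin 4 → Pref (Fin 3)} (h : Inv18 Q) (x : Fin 3) :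
    support Q 0 x = 0 := by
  unfold support
  rw [Finset.card_eq_zero, Finset.filter_eq_empty_iff]
  intro i _
  exact h.1 i x

theorem support_pos18 {Q : Fin 4 → Pref (Fin 3)} (h : Inv18 Q) (x : Fin 3) (hx : x ≠ 0) :
    0 < support Q x 0 := by
  unfold support
  rw [Finset.card_pos]
  exact ⟨3, Finset.mem_filter.2 ⟨Finset.mem_univ _, h.2.2.2.2.2 x hx⟩⟩

theorem inv_step18 {Q : Fin 4 → Pref (Fin 3)} (h : Inv18 Q) (p : Fin 3 × Fin 3)
    (hp : p.1 ≠ p.2) : Inv18 (mdStep Q p) := by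
  refine ⟨?_, mdStep_mono18 _ _ _ _ _ h.2.1, mdStep_mono18 _ _ _ _ _ h.2.2.1,
    mdStep_mono18 _ _ _ _ _ h.2.2.2.1, mdStep_mono18 _ _ _ _ _ h.2.2.2.2.1,
    fun x hx => mdStep_mono18 _ _ _ _ _ (h.2.2.2.2.2 x hx)⟩
  intro i x
  obtain ⟨a, b⟩ := p
  unfold mdStep
  dsimp only at hp ⊢
  split_ifs with h1 h2
  · exact h.1 i x
  · apply no_out18
    rintro y (hy | ⟨rfl, rfl⟩)
    · exact h.1 i y hy
    · have := support_pos18 h y hp.symm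
      have := support_zero18 h y
      omega
  · apply no_out18
    rintro y (hy | ⟨rfl, rfl⟩)
    · exact h.1 i y hy
    · have := support_zero18 h y
      omega

theorem step_ranks18 {Q : Fin 4 → Pref (Fin 3)} (h : Inv18 Q) (p : Fin 3 × Fin 3)
    (hp : p = (0, 1) ∨ p = (1, 0)) (i : Fin 4) : mdStep Q p i 1 0 := by
  have h0 := support_zero18 h 1
  have h1 := support_pos18 h 1 (by decide)
  rcases hp with rfl | rfl
  · unfold mdStep
    dsimp only
    split_ifs with h2 h3
    · exact h2.resolve_left (h.1 i 1)
    · omega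
    · exact Relation.TransGen.single (Or.inr ⟨rfl, rfl⟩)
  · unfold mdStep
    dsimp only
    split_ifs with h2 h3
    · exact h2.resolve_right (h.1 i 1)
    · exact Relation.TransGen.single (Or.inr ⟨rfl, rfl⟩)
    · omega

theorem md_mono18 (σ : List (Fin 3 × Fin 3)) : ∀ (Q : Fin 4 → Pref (Fin 3)) (i : Fin 4)
    (x y : Fin 3), Q i x y → MD σ Q i x y := by
  induction σ with
  | nil => intro Q i x y h; exact h
  | cons p σ ih => intro Q i x y h; exact ih _ i x y (mdStep_mono18 Q p i x y h)

theorem md_ranks18 (σ : List (Fin 3 × Fin 3)) : ∀ (Q : Fin 4 → Pref (Fin 3)), Inv18 Q →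
    (∀ p ∈ σ, p.1 ≠ p.2) → ((0, 1) ∈ σ ∨ (1, 0) ∈ σ) → ∀ i, MD σ Q i 1 0 := by
  induction σ with
  | nil => intro Q _ _ h; simp at h
  | cons p σ ih =>
    intro Q hQ hne hm i
    by_cases hp : p = (0, 1) ∨ p = (1, 0)
    · exact md_mono18 σ _ i 1 0 (step_ranks18 hQ p hp i)
    · refine ih _ (inv_step18 hQ p (hne p (by simp)))
        (fun q hq => hne q (List.mem_cons_of_mem _ hq)) ?_ i
      push Not at hp
      rcases hm with hm | hm
      · exact Or.inl ((List.mem_cons.1 hm).resolve_left (fun e => hp.1 e.symm))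
      · exact Or.inr ((List.mem_cons.1 hm).resolve_left (fun e => hp.2 e.symm))

/-- Two distinct agents in which `b` is dominated prevent a strict majority for `b`. -/
theorem ud_le18 (Q : Fin 4 → Pref (Fin 3)) (b : Fin 3) (i j : Fin 4) (hij : i ≠ j) (x y : Fin 3)
    (hi : Q i x b) (hj : Q j y b) : udCount Q b ≤ 2 := by
  have hsub : (Finset.univ.filter fun k => Undominated (Q k) b) ⊆ ({i, j} : Finset (Fin 4))ᶜ := by
    intro k hk
    have hk' := (Finset.mem_filter.1 hk).2
    rw [Finset.mem_compl, Finset.mem_insert, Finset.mem_singleton]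
    rintro (rfl | rfl)
    · exact hk' x hi
    · exact hk' y hj
  have := Finset.card_le_card hsub
  rw [Finset.card_compl, Finset.card_pair hij, Fintype.card_fin] at this
  exact this

/-- The profile: agents 0, 1 rank 1 over 2; agent 2 ranks 2 over 1; agent 3 ranks 2, 1, 0. -/
def prof18 (i : Fin 4) (x y : Fin 3) : Prop :=
  (i.val < 2 ∧ x = 1 ∧ y = 2) ∨ (2 ≤ i.val ∧ x = 2 ∧ y = 1) ∨ (i = 3 ∧ x ≠ 0 ∧ y = 0)

theorem inv_prof18 : Inv18 prof18 := by
  unfold Inv18 prof18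
  refine ⟨?_, ?_, ?_, ?_, ?_, ?_⟩ <;> simp

/-- Majority dynamics does not enable positive MajUD-consensus
existence control. -/
theorem stmt_18 :
    ∃ (m n : ℕ) (P : Fin n → Pref (Fin m)) (a : Fin m),
      3 ≤ m ∧ (∀ i, IsPref (P i)) ∧ MajUDConsensus P a ∧
      ∀ σ : List (Fin m × Fin m), IsUpdateOrder σ →
        ∀ b, ¬ MajUDConsensus (MD σ P) b := by
  refine ⟨3, 4, prof18, 0, le_refl _, ?_, ⟨?_, ?_⟩, ?_⟩
  · intro i
    refine ⟨?_, ?_⟩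
    · intro x
      unfold prof18
      revert i x
      decide
    · intro x y z
      unfold prof18
      revert i x y z
      decide
  · have hsub : ({0, 1, 2} : Finset (Fin 4)) ⊆
        Finset.univ.filter fun k => Undominated (prof18 k) 0 := by
      intro k hk
      refine Finset.mem_filter.2 ⟨Finset.mem_univ _, ?_⟩
      intro b
      unfold prof18
      revert k b
      decide
    have h3 : 3 ≤ udCount prof18 0 := Finset.card_le_card hsub
    omega
  · intro b hb
    have h1 := ud_le18 prof18 1 2 3 (by decide) 2 2 inv_prof18.2.2.2.1 inv_prof18.2.2.2.2.1
    have h2 := ud_le18 prof18 2 0 1 (by decide) 1 1 inv_prof18.2.1 inv_prof18.2.2.1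
    fin_cases b
    · rfl
    · simp at hb; omega
    · simp at hb; omega
  · intro σ hσ b hb
    have hm : (0, 1) ∈ σ ∨ (1, 0) ∈ σ := by
      by_contra hcon
      push Not at hcon
      have := hσ.2 0 1 (by decide)
      rw [List.count_eq_zero_of_not_mem hcon.1, List.count_eq_zero_of_not_mem hcon.2] at this
      omega
    have hr := md_ranks18 σ prof18 inv_prof18 hσ.1 hm
    have hmo := md_mono18 σ prof18
    have h0 := ud_le18 (MD σ prof18) 0 0 1 (by decide) 1 1 (hr 0) (hr 1)
    have h1 := ud_le18 (MD σ prof18) 1 2 3 (by decide) 2 2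
      (hmo _ _ _ inv_prof18.2.2.2.1) (hmo _ _ _ inv_prof18.2.2.2.2.1)
    have h2 := ud_le18 (MD σ prof18) 2 0 1 (by decide) 1 1
      (hmo _ _ _ inv_prof18.2.1) (hmo _ _ _ inv_prof18.2.2.1)
    have hb1 := hb.1
    fin_cases b
    · simp at hb1; omega
    · simp at hb1; omega
    · simp at hb1; omega

end
end

section
/- Majority dynamics enables negative Condorcet-winner control: for every profile P that has no Condorcet winner, either there exists an update order σ such that MD_σ(P) has no Condorcet winner, or there exist update orders σ and σ' such that the Condorcet winners of MD_σ(P) and MD_σ'(P) both exist and are distinct. -/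
attribute [local instance] Classical.propDecidable

noncomputable section

variable {A : Type} [Fintype A] [DecidableEq A]

theorem transGen_add_aux {r : Pref A} (hr : IsPref r) {a b : A} (hba : ¬ r b a) (hab : a ≠ b)
    {x y : A} (h : Relation.TransGen (fun x y => r x y ∨ (x = a ∧ y = b)) x y) :
    r x y ∨ ((x = a ∨ r x a) ∧ (y = b ∨ r b y)) := by
  have ht : ∀ {x y z}, r x y → r y z → r x z := fun h1 h2 => hr.2 h1 h2
  induction h with
  | single h =>
    rcases h with h | ⟨rfl, rfl⟩
    · exact Or.inl h
    · exact Or.inr ⟨Or.inl rfl, Or.inl rfl⟩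
  | tail _ h ih =>
    rcases h with h | ⟨rfl, rfl⟩
    · rcases ih with ih | ⟨h1, h2⟩
      · exact Or.inl (ht ih h)
      · refine Or.inr ⟨h1, Or.inr ?_⟩
        rcases h2 with rfl | h2
        · exact h
        · exact ht h2 h
    · rcases ih with ih | ⟨h1, h2⟩
      · exact Or.inr ⟨Or.inr ih, Or.inl rfl⟩
      · rcases h2 with h2 | h2
        · exact absurd h2 hab
        · exact absurd h2 hba

theorem isPref_add {r : Pref A} (hr : IsPref r) {a b : A} (hba : ¬ r b a) (hab : a ≠ b) :
    IsPref (Relation.TransGen (fun x y => r x y ∨ (x = a ∧ y = b))) := by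
  refine ⟨fun x hx => ?_, fun x y z h1 h2 => h1.trans h2⟩
  rcases transGen_add_aux hr hba hab hx with h | ⟨h1, h2⟩
  · exact hr.1 x h
  · rcases h1 with rfl | h1 <;> rcases h2 with rfl | h2
    · exact hab rfl
    · exact hba h2
    · exact hba h1
    · exact hba (hr.2 h2 h1)

theorem mdStep_isPref {n : ℕ} {P : Fin n → Pref A} (hP : ∀ i, IsPref (P i)) {p : A × A}
    (hp : p.1 ≠ p.2) (i : Fin n) : IsPref (mdStep P p i) := by
  unfold mdStep
  split_ifs with h1 h2
  · exact hP i
  · exact isPref_add (hP i) (fun h => h1 (Or.inr h)) hp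
  · exact isPref_add (hP i) (fun h => h1 (Or.inl h)) hp.symm

theorem mdStep_mono {n : ℕ} {P : Fin n → Pref A} {p : A × A} (i : Fin n) {x y : A}
    (h : P i x y) : mdStep P p i x y := by
  unfold mdStep
  split_ifs with h1 h2
  · exact h
  · exact Relation.TransGen.single (Or.inl h)
  · exact Relation.TransGen.single (Or.inl h)

theorem MD_isPref_mono {n : ℕ} (σ : List (A × A)) : ∀ (P : Fin n → Pref A),
    (∀ i, IsPref (P i)) → (∀ p ∈ σ, p.1 ≠ p.2) →
    (∀ i, IsPref (MD σ P i)) ∧ ∀ i x y, P i x y → MD σ P i x y := by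
  induction σ with
  | nil => intro P hP _; exact ⟨hP, fun _ _ _ h => h⟩
  | cons p σ ih =>
    intro P hP hσ
    obtain ⟨h1, h2⟩ := ih (mdStep P p) (mdStep_isPref hP (hσ p (by simp)))
      (fun q hq => hσ q (by simp [hq]))
    exact ⟨h1, fun i x y h => h2 i x y (mdStep_mono i h)⟩

theorem MD_cons_support {n : ℕ} (σ : List (A × A)) (P : Fin n → Pref A)
    (hP : ∀ i, IsPref (P i)) (b c : A) (hσ : ∀ p ∈ (b, c) :: σ, p.1 ≠ p.2)
    (h : support P c b ≤ support P b c) :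
    support (MD ((b, c) :: σ) P) c b ≤ support (MD ((b, c) :: σ) P) b c := by
  have hbc : b ≠ c := hσ (b, c) (by simp)
  have hP' : ∀ i, IsPref (mdStep P (b, c) i) := mdStep_isPref hP hbc
  obtain ⟨h1, h2⟩ := MD_isPref_mono ((b, c) :: σ) P hP hσ
  obtain ⟨_, h3⟩ := MD_isPref_mono σ (mdStep P (b, c)) hP' (fun q hq => hσ q (by simp [hq]))
  have key : ∀ i, ¬ P i c b → MD ((b, c) :: σ) P i b c := by
    intro i hi
    apply h3
    by_cases hb : P i b c
    · exact mdStep_mono i hb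
    · have : mdStep P (b, c) i = Relation.TransGen (fun x y => P i x y ∨ (x = b ∧ y = c)) := by
        simp [mdStep, hi, hb, h]
      rw [this]
      exact Relation.TransGen.single (Or.inr ⟨rfl, rfl⟩)
  calc support (MD ((b, c) :: σ) P) c b ≤ support P c b := by
        apply Finset.card_le_card
        intro i hi
        simp only [Finset.mem_filter, Finset.mem_univ, true_and] at hi ⊢
        by_contra hn
        exact (h1 i).1 c ((h1 i).2 hi (key i hn))
    _ ≤ support P b c := h
    _ ≤ _ := by
        apply Finset.card_le_card
        intro i hi
        simp only [Finset.mem_filter, Finset.mem_univ, true_and] at hi ⊢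
        exact h2 i _ _ hi

theorem exists_updateOrder_cons (b c : A) (hbc : b ≠ c) :
    ∃ σ : List (A × A), IsUpdateOrder ((b, c) :: σ) := by
  let e := Fintype.equivFin A
  let T : Finset (A × A) := Finset.univ.filter
    fun p => e p.1 < e p.2 ∧ p ≠ (b, c) ∧ p ≠ (c, b)
  have hT : ∀ x y, (x, y) ∈ T.toList ↔ (e x < e y ∧ (x, y) ≠ (b, c) ∧ (x, y) ≠ (c, b)) := by
    intro x y; simp [T]
  refine ⟨T.toList, ?_, ?_⟩
  · rintro ⟨x, y⟩ hp
    rcases List.mem_cons.1 hp with h | h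
    · cases h; exact hbc
    · intro hxy; change x = y at hxy; subst hxy
      exact lt_irrefl _ ((hT _ _).1 h).1
  · intro x y hxy
    have hlt : e x < e y ∨ e y < e x := lt_or_gt_of_ne (fun h => hxy (e.injective h))
    rw [List.count_cons, List.count_cons, T.nodup_toList.count, T.nodup_toList.count]
    simp only [hT, Prod.mk.injEq, beq_iff_eq, ne_eq]
    have : ∀ u v, e u < e v → ¬ e v < e u := fun u v h => lt_asymm h
    by_cases h1 : x = b <;> by_cases h2 : y = c <;> by_cases h3 : x = c <;> by_cases h4 : y = b <;>
      grind

theorem exists_updateOrder : ∃ σ : List (A × A), IsUpdateOrder σ := by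
  by_cases h : ∃ b c : A, b ≠ c
  · obtain ⟨b, c, h⟩ := h
    obtain ⟨σ, hσ⟩ := exists_updateOrder_cons b c h
    exact ⟨_, hσ⟩
  · push Not at h
    exact ⟨[], by simp, fun a b hab => absurd (h a b) hab⟩

/-- Majority dynamics enables negative Condorcet-winner control. -/
theorem stmt_19 {n : ℕ} (P : Fin n → Pref A) (hP : ∀ i, IsPref (P i))
    (hno : ∀ a, ¬ CondorcetWinner P a) :
    (∃ σ : List (A × A), IsUpdateOrder σ ∧ ∀ a, ¬ CondorcetWinner (MD σ P) a) ∨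
    (∃ (σ σ' : List (A × A)) (a a' : A), IsUpdateOrder σ ∧ IsUpdateOrder σ' ∧
      CondorcetWinner (MD σ P) a ∧ CondorcetWinner (MD σ' P) a' ∧ a ≠ a') := by
  obtain ⟨σ, hσ⟩ := exists_updateOrder (A := A)
  by_cases h : ∃ c, CondorcetWinner (MD σ P) c
  · obtain ⟨c, hc⟩ := h
    have := hno c
    simp only [CondorcetWinner, not_forall, not_lt] at this
    obtain ⟨b, hbc, hle⟩ := this
    obtain ⟨τ, hτ⟩ := exists_updateOrder_cons b c hbc
    have hs := MD_cons_support τ P hP b c hτ.1 hle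
    by_cases h' : ∃ d, CondorcetWinner (MD ((b, c) :: τ) P) d
    · obtain ⟨d, hd⟩ := h'
      refine Or.inr ⟨σ, _, c, d, hσ, hτ, hc, hd, ?_⟩
      rintro rfl
      exact absurd (hd b hbc) (not_lt.2 hs)
    · exact Or.inl ⟨_, hτ, fun a ha => h' ⟨a, ha⟩⟩
  · exact Or.inl ⟨σ, hσ, fun a ha => h ⟨a, ha⟩⟩

end
end
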